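/- arXiv:math/0702401 — 3 statements merged into one kernel-verified Lean document; each statement's English description precedes it below -/
import Mathlib

section
/- For every τ in the complex upper half-plane ℍ, with x = x₁₀(τ) = 2θ₃(512τ)/θ₂(512τ), y = y₁₀(τ) = θ₂(8τ)/θ₂(512τ), u = (x−2)⁸ and v = x(x+2)⁴(x²+4), one has y⁶⁴ − 4096·v·y⁵⁶ − 61696·u·v·y⁴⁸ − 512·u·v·(253u + 30464v)·y⁴⁰ − 16·u·v·(4619u² − 525568·u·v + 33488896·v²)·y³² − 512·u·v·(31u³ + 35712u²v + 196608·u·v² + 8388608·v³)·y²⁴ − 32·u³·v·(47u² − 320000·u·v + 17268736·v²)·y¹⁶ − 64·u³·v·(u³ + 5248·u²·v + 1310720·u·v² + 67108864·v³)·y⁸ − u⁷·v = 0 (a defining equation of X₀(1024)). -/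
open Complex Filter Topology

/-- Jacobi theta function θ₂(τ) = ∑_{n∈ℤ} exp(πiτ(n+1/2)²). -/
noncomputable def θ₂ (τ : ℂ) : ℂ :=
  ∑' n : ℤ, Complex.exp (Real.pi * Complex.I * τ * ((n : ℂ) + 1/2)^2)

/-- Jacobi theta function θ₃(τ) = ∑_{n∈ℤ} exp(πiτn²). -/
noncomputable def θ₃ (τ : ℂ) : ℂ :=
  ∑' n : ℤ, Complex.exp (Real.pi * Complex.I * τ * (n : ℂ)^2)

/-- x_n(τ) = 2θ₃(2^{n-1}τ)/θ₂(2^{n-1}τ). -/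
noncomputable def xfun (n : ℕ) (τ : ℂ) : ℂ :=
  2 * θ₃ (2^(n-1) * τ) / θ₂ (2^(n-1) * τ)

/-- y_n(τ) = θ₂(8τ)/θ₂(2^{n-1}τ). -/
noncomputable def yfun (n : ℕ) (τ : ℂ) : ℂ :=
  θ₂ (8 * τ) / θ₂ (2^(n-1) * τ)

/-!
The theta constants satisfy the duplication formulas
`θ₂(τ)² = 2θ₂(2τ)θ₃(2τ)`, `θ₃(τ)² = θ₃(2τ)² + θ₂(2τ)²` and `θ₃(τ) = θ₃(4τ) + θ₂(4τ)`.
Three duplications express `θ₂(τ)⁸` as a form `128PQ(P² + Q²)(P + Q)⁴` in `P = θ₂(8τ)` and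
`Q = θ₃(8τ)`. Applied at `8τ` and at `64τ` (where `P`, `Q` are the theta constants at `512τ`), and
combined with `θ₄(128τ)⁸ = θ₃(64τ)⁴θ₄(64τ)⁴`, this shows that `y⁸`, `u` and `v` are proportional to
`128PQ(P² + Q²)(P + Q)⁴`, `256Q⁴(Q⁴ - P⁴)` and `P⁸`, now with `P = θ₂(64τ)`, `Q = θ₃(64τ)`.
The polynomial of the theorem eliminates `P` and `Q`: as a polynomial in `w = y⁸` it is the product
of `w` minus the eight conjugates of the first form under the substitutions `Q ↦ iQ` and
`Q⁴ ↦ P⁴ - Q⁴`, which fix `u` and `v`.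
-/

section ParitySplitting

variable {M : Type*} [AddCommMonoid M] [TopologicalSpace M] [ContinuousAdd M] {a b : M}

lemma hasSum_int_even_add_odd {f : ℤ → M} (he : HasSum (fun k ↦ f (2 * k)) a)
    (ho : HasSum (fun k ↦ f (2 * k + 1)) b) : HasSum f (a + b) := by
  have he_inj : Function.Injective fun k : ℤ ↦ 2 * k := mul_right_injective₀ two_ne_zero
  have ho_inj : Function.Injective fun k : ℤ ↦ 2 * k + 1 := (add_left_injective 1).comp he_inj
  refine (he_inj.hasSum_range_iff.2 he).add_isCompl ?_ (ho_inj.hasSum_range_iff.2 ho)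
  simpa using Int.isCompl_even_odd

lemma hasSum_prod_int_even_add_odd {f : ℤ × ℤ → M}
    (he : HasSum (fun p : ℤ × ℤ ↦ f (p.1 + p.2, p.1 - p.2)) a)
    (ho : HasSum (fun p : ℤ × ℤ ↦ f (p.1 + p.2 + 1, p.1 - p.2)) b) : HasSum f (a + b) := by
  have he_inj : Function.Injective fun p : ℤ × ℤ ↦ (p.1 + p.2, p.1 - p.2) := by
    rintro ⟨k, l⟩ ⟨k', l'⟩ h
    simp only [Prod.mk.injEq] at h ⊢
    omega
  have ho_inj : Function.Injective fun p : ℤ × ℤ ↦ (p.1 + p.2 + 1, p.1 - p.2) := by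
    rintro ⟨k, l⟩ ⟨k', l'⟩ h
    simp only [Prod.mk.injEq] at h ⊢
    omega
  refine (he_inj.hasSum_range_iff.2 he).add_isCompl ⟨?_, ?_⟩ (ho_inj.hasSum_range_iff.2 ho)
  · rw [Set.disjoint_iff]
    rintro _ ⟨⟨⟨k, l⟩, rfl⟩, ⟨⟨k', l'⟩, h⟩⟩
    simp only [Prod.mk.injEq] at h
    omega
  · rw [codisjoint_iff_le_sup]
    rintro ⟨m, n⟩ -
    rcases Int.even_or_odd' (m + n) with ⟨k, hk | hk⟩
    · exact Or.inl ⟨(k, k - n), by simp only [Prod.mk.injEq]; omega⟩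
    · exact Or.inr ⟨(k, k - n), by simp only [Prod.mk.injEq]; omega⟩

end ParitySplitting

lemma hasSum_prod_mul {ι κ : Type*} {f : ι → ℂ} {g : κ → ℂ} {a b : ℂ}
    (hf : HasSum f a) (hg : HasSum g b) : HasSum (fun p : ι × κ ↦ f p.1 * g p.2) (a * b) :=
  hf.mul hg (summable_mul_of_summable_norm hf.summable.norm hg.summable.norm)

/-- The theta constant `ϑ_a(τ) = ∑_{n ∈ ℤ} exp(πiτ(n + a)²)` with characteristic `a`.
It is `θ₃` at `a = 0` and `θ₂` at `a = 1/2`, so that the duplication formulas of both are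
instances of a single product formula. -/
noncomputable def thetaChar (a τ : ℂ) : ℂ :=
  ∑' n : ℤ, cexp (Real.pi * I * τ * (n + a) ^ 2)

lemma θ₂_eq_thetaChar (τ : ℂ) : θ₂ τ = thetaChar (1 / 2) τ := rfl

lemma θ₃_eq_thetaChar (τ : ℂ) : θ₃ τ = thetaChar 0 τ := by
  simp only [θ₃, thetaChar, add_zero]

lemma θ₃_eq_jacobiTheta (τ : ℂ) : θ₃ τ = jacobiTheta τ :=
  tsum_congr fun n ↦ by ring_nf

lemma exp_thetaChar_term (a τ : ℂ) (n : ℤ) :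
    cexp (Real.pi * I * τ * (n + a) ^ 2) =
      cexp (Real.pi * I * τ * a ^ 2) * jacobiTheta₂_term n (a * τ) τ := by
  rw [jacobiTheta₂_term, ← Complex.exp_add]
  ring_nf

lemma thetaChar_eq_exp_mul_jacobiTheta₂ (a τ : ℂ) :
    thetaChar a τ = cexp (Real.pi * I * τ * a ^ 2) * jacobiTheta₂ (a * τ) τ := by
  simp only [thetaChar, exp_thetaChar_term, tsum_mul_left, jacobiTheta₂]

lemma thetaChar_add_one (a τ : ℂ) : thetaChar (a + 1) τ = thetaChar a τ := by
  rw [thetaChar, thetaChar,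
    ← (Equiv.addRight (1 : ℤ)).tsum_eq fun n : ℤ ↦ cexp (Real.pi * I * τ * (n + a) ^ 2)]
  refine tsum_congr fun n ↦ ?_
  simp only [Equiv.coe_addRight, Int.cast_add, Int.cast_one]
  ring_nf

section UpperHalfPlane

variable {τ : ℂ}

lemma hasSum_thetaChar (a : ℂ) (hτ : 0 < τ.im) :
    HasSum (fun n : ℤ ↦ cexp (Real.pi * I * τ * (n + a) ^ 2)) (thetaChar a τ) := by
  simp only [thetaChar_eq_exp_mul_jacobiTheta₂, exp_thetaChar_term]
  exact (hasSum_jacobiTheta₂_term (a * τ) hτ).mul_left _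

lemma hasSum_thetaChar_mul_thetaChar (a b : ℂ) (hτ : 0 < τ.im) :
    HasSum (fun p : ℤ × ℤ ↦ cexp (Real.pi * I * τ * ((p.1 + a) ^ 2 + (p.2 + b) ^ 2)))
      (thetaChar a τ * thetaChar b τ) := by
  simpa only [← Complex.exp_add, ← mul_add] using
    hasSum_prod_mul (hasSum_thetaChar a hτ) (hasSum_thetaChar b hτ)

lemma thetaChar_eq_add (a : ℂ) (hτ : 0 < τ.im) :
    thetaChar a τ = thetaChar (a / 2) (4 * τ) + thetaChar ((a + 1) / 2) (4 * τ) := by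
  have h4τ : 0 < (4 * τ).im := by simpa using hτ
  refine (hasSum_thetaChar a hτ).unique (hasSum_int_even_add_odd ?_ ?_)
  · refine (hasSum_thetaChar (a / 2) h4τ).congr_fun fun _ ↦ ?_
    push_cast
    ring_nf
  · refine (hasSum_thetaChar ((a + 1) / 2) h4τ).congr_fun fun _ ↦ ?_
    push_cast
    ring_nf

/-- The parallelogram law turns `(m + a)² + (n + b)²` into half a sum of squares of
`m + n + a + b` and `m - n + a - b`; the two summands collect the pairs with `m + n` even and
odd. -/
lemma thetaChar_mul_thetaChar (a b : ℂ) (hτ : 0 < τ.im) :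
    thetaChar a τ * thetaChar b τ =
      thetaChar ((a + b) / 2) (2 * τ) * thetaChar ((a - b) / 2) (2 * τ) +
        thetaChar ((a + b + 1) / 2) (2 * τ) * thetaChar ((a - b + 1) / 2) (2 * τ) := by
  have h2τ : 0 < (2 * τ).im := by simpa using hτ
  refine (hasSum_thetaChar_mul_thetaChar a b hτ).unique (hasSum_prod_int_even_add_odd ?_ ?_)
  · refine (hasSum_thetaChar_mul_thetaChar ((a + b) / 2) ((a - b) / 2) h2τ).congr_fun fun _ ↦ ?_
    push_cast
    ring_nf
  · refine (hasSum_thetaChar_mul_thetaChar ((a + b + 1) / 2) ((a - b + 1) / 2) h2τ).congr_fun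
      fun _ ↦ ?_
    push_cast
    ring_nf

lemma θ₃_eq_θ₃_add_θ₂ (hτ : 0 < τ.im) : θ₃ τ = θ₃ (4 * τ) + θ₂ (4 * τ) := by
  simpa only [θ₃_eq_thetaChar, θ₂_eq_thetaChar, zero_div, zero_add] using thetaChar_eq_add 0 hτ

lemma θ₃_sq (hτ : 0 < τ.im) : θ₃ τ ^ 2 = θ₃ (2 * τ) ^ 2 + θ₂ (2 * τ) ^ 2 := by
  simpa only [θ₃_eq_thetaChar, θ₂_eq_thetaChar, sq, add_zero, sub_zero, zero_div, zero_add]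
    using thetaChar_mul_thetaChar 0 0 hτ

lemma θ₂_sq (hτ : 0 < τ.im) : θ₂ τ ^ 2 = 2 * θ₂ (2 * τ) * θ₃ (2 * τ) := by
  have hmul := thetaChar_mul_thetaChar (1 / 2) (1 / 2) hτ
  have hone : ((1 / 2 + 1 / 2 + 1) / 2 : ℂ) = 0 + 1 := by norm_num
  rw [hone, thetaChar_add_one, add_halves, sub_self, zero_div, zero_add] at hmul
  rw [θ₂_eq_thetaChar, θ₂_eq_thetaChar, θ₃_eq_thetaChar]
  linear_combination hmul

/-- The Jacobi theta function `θ₄(τ) = ∑_{n ∈ ℤ} (-1)ⁿ exp(πiτn²)`, encoded as the value of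
Mathlib's two-variable theta function at `z = 1/2`. It accounts for the factor `x - 2` in the
equation and controls the zeros of `θ₂`. -/
noncomputable def θ₄ (τ : ℂ) : ℂ := jacobiTheta₂ (1 / 2) τ

lemma jacobiTheta₂_term_half (n : ℤ) (τ : ℂ) :
    jacobiTheta₂_term n (1 / 2) τ = (-1) ^ n * cexp (Real.pi * I * τ * n ^ 2) := by
  rw [jacobiTheta₂_term, Complex.exp_add, ← Complex.exp_pi_mul_I, ← Complex.exp_int_mul]
  ring_nf

lemma θ₄_eq_θ₃_sub_θ₂ (hτ : 0 < τ.im) : θ₄ τ = θ₃ (4 * τ) - θ₂ (4 * τ) := by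
  have h4τ : 0 < (4 * τ).im := by simpa using hτ
  rw [sub_eq_add_neg, θ₃_eq_thetaChar, θ₂_eq_thetaChar]
  refine (hasSum_jacobiTheta₂_term (1 / 2) hτ).unique (hasSum_int_even_add_odd ?_ ?_)
  · refine (hasSum_thetaChar 0 h4τ).congr_fun fun n ↦ ?_
    rw [jacobiTheta₂_term_half, (even_two_mul n).neg_one_zpow]
    push_cast
    ring_nf
  · refine (hasSum_thetaChar (1 / 2) h4τ).neg.congr_fun fun n ↦ ?_
    rw [jacobiTheta₂_term_half, (odd_two_mul_add_one n).neg_one_zpow]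
    push_cast
    ring_nf

lemma θ₄_sq (hτ : 0 < τ.im) : θ₄ τ ^ 2 = θ₃ (2 * τ) ^ 2 - θ₂ (2 * τ) ^ 2 := by
  have h2τ : 0 < (2 * τ).im := by simpa using hτ
  rw [θ₃_sq h2τ, θ₂_sq h2τ, θ₄_eq_θ₃_sub_θ₂ hτ, show 2 * (2 * τ) = 4 * τ by ring]
  ring

lemma θ₄_two_mul_sq (hτ : 0 < τ.im) : θ₄ (2 * τ) ^ 2 = θ₃ τ * θ₄ τ := by
  have h2τ : 0 < (2 * τ).im := by simpa using hτ
  rw [θ₄_sq h2τ, θ₃_eq_θ₃_add_θ₂ hτ, θ₄_eq_θ₃_sub_θ₂ hτ, show 2 * (2 * τ) = 4 * τ by ring]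
  ring

lemma θ₃_pow_four (hτ : 0 < τ.im) : θ₃ τ ^ 4 = θ₂ τ ^ 4 + θ₄ τ ^ 4 := by
  linear_combination (θ₃ τ ^ 2 + θ₃ (2 * τ) ^ 2 + θ₂ (2 * τ) ^ 2) * θ₃_sq hτ
    - (θ₂ τ ^ 2 + 2 * θ₂ (2 * τ) * θ₃ (2 * τ)) * θ₂_sq hτ
    - (θ₄ τ ^ 2 + θ₃ (2 * τ) ^ 2 - θ₂ (2 * τ) ^ 2) * θ₄_sq hτ

lemma θ₂_pow_eight (hτ : 0 < τ.im) :
    θ₂ τ ^ 8 = 128 * θ₂ (8 * τ) * θ₃ (8 * τ) * (θ₂ (8 * τ) ^ 2 + θ₃ (8 * τ) ^ 2)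
      * (θ₂ (8 * τ) + θ₃ (8 * τ)) ^ 4 := by
  have h2τ : 0 < (2 * τ).im := by simpa using hτ
  have h4τ : 0 < (4 * τ).im := by simpa using hτ
  calc θ₂ τ ^ 8 = (θ₂ τ ^ 2) ^ 4 := by ring
    _ = 16 * (θ₂ (2 * τ) ^ 2) ^ 2 * θ₃ (2 * τ) ^ 4 := by rw [θ₂_sq hτ]; ring
    _ = 64 * θ₂ (4 * τ) ^ 2 * θ₃ (4 * τ) ^ 2 * (θ₃ (8 * τ) + θ₂ (8 * τ)) ^ 4 := by
      rw [θ₂_sq h2τ, θ₃_eq_θ₃_add_θ₂ h2τ, show 2 * (2 * τ) = 4 * τ by ring,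
        show 4 * (2 * τ) = 8 * τ by ring]
      ring
    _ = _ := by
      rw [θ₂_sq h4τ, θ₃_sq h4τ, show 2 * (4 * τ) = 8 * τ by ring]
      ring

lemma θ₃_sub_θ₂_pow_eight (hτ : 0 < τ.im) :
    (θ₃ (8 * τ) - θ₂ (8 * τ)) ^ 8 = θ₃ τ ^ 4 * (θ₃ τ ^ 4 - θ₂ τ ^ 4) := by
  have h2τ : 0 < (2 * τ).im := by simpa using hτ
  calc (θ₃ (8 * τ) - θ₂ (8 * τ)) ^ 8 = (θ₄ (2 * τ) ^ 2) ^ 4 := by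
        rw [θ₄_eq_θ₃_sub_θ₂ h2τ, show 4 * (2 * τ) = 8 * τ by ring]
        ring
    _ = θ₃ τ ^ 4 * θ₄ τ ^ 4 := by rw [θ₄_two_mul_sq hτ, mul_pow]
    _ = _ := by rw [θ₃_pow_four hτ, add_sub_cancel_left]

lemma tendsto_θ₃_comap_im_atTop : Tendsto θ₃ (comap im atTop) (𝓝 1) := by
  have hexp : Tendsto (fun τ : ℂ ↦ Real.exp (-Real.pi * τ.im)) (comap im atTop) (𝓝 0) :=
    Real.tendsto_exp_atBot.comp
      (tendsto_comap.const_mul_atTop_of_neg (neg_lt_zero.2 Real.pi_pos))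
  rw [funext θ₃_eq_jacobiTheta]
  exact tendsto_sub_nhds_zero_iff.1 (isBigO_at_im_infty_jacobiTheta_sub_one.trans_tendsto hexp)

lemma tendsto_θ₄_comap_im_atTop : Tendsto θ₄ (comap im atTop) (𝓝 1) := by
  have hfour : Tendsto (fun τ : ℂ ↦ 4 * τ) (comap im atTop) (comap im atTop) := by
    rw [tendsto_comap_iff]
    simpa [Function.comp_def] using tendsto_comap.const_mul_atTop (show (0 : ℝ) < 4 by norm_num)
  have hlim : Tendsto (fun τ ↦ 2 * θ₃ (4 * τ) - θ₃ τ) (comap im atTop) (𝓝 (2 * 1 - 1)) :=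
    ((tendsto_θ₃_comap_im_atTop.comp hfour).const_mul 2).sub tendsto_θ₃_comap_im_atTop
  rw [show (2 * 1 - 1 : ℂ) = 1 by norm_num] at hlim
  refine hlim.congr' ?_
  filter_upwards [tendsto_comap.eventually_gt_atTop 0] with τ hτ
  rw [θ₃_eq_θ₃_add_θ₂ hτ, θ₄_eq_θ₃_sub_θ₂ hτ]
  ring

lemma im_two_pow_mul (k : ℕ) (τ : ℂ) : (2 ^ k * τ).im = 2 ^ k * τ.im := by
  rw [← ofReal_ofNat, ← ofReal_pow, im_ofReal_mul]

lemma two_pow_mul_im_pos (k : ℕ) (hτ : 0 < τ.im) : 0 < (2 ^ k * τ).im := by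
  rw [im_two_pow_mul]
  positivity

/-- Since `θ₄(2τ)² = θ₃(τ)θ₄(τ)`, a zero of `θ₄` at `τ` would propagate to all `2ᵏτ`, where `θ₄`
tends to `1`. -/
lemma θ₄_ne_zero (hτ : 0 < τ.im) : θ₄ τ ≠ 0 := by
  intro hzero
  have hzero_two_pow (k : ℕ) : θ₄ (2 ^ k * τ) = 0 := by
    induction k with
    | zero => rwa [pow_zero, one_mul]
    | succ k ih =>
      rw [pow_succ', mul_assoc, ← sq_eq_zero_iff, θ₄_two_mul_sq (two_pow_mul_im_pos k hτ), ih,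
        mul_zero]
  have him : Tendsto (fun k : ℕ ↦ 2 ^ k * τ) atTop (comap im atTop) := by
    rw [tendsto_comap_iff]
    convert (tendsto_pow_atTop_atTop_of_one_lt one_lt_two).atTop_mul_const hτ using 2 with k
    exact im_two_pow_mul k τ
  obtain ⟨k, hk⟩ := ((tendsto_θ₄_comap_im_atTop.comp him).eventually_ne one_ne_zero).exists
  exact hk (hzero_two_pow k)

/-- The modular inversion `τ ↦ -1/τ` exchanges `θ₂` and `θ₄`. -/
lemma θ₂_ne_zero (hτ : 0 < τ.im) : θ₂ τ ≠ 0 := by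
  have hτ0 : τ ≠ 0 := by
    rintro rfl
    exact lt_irrefl _ hτ
  have hinv : 0 < (-1 / τ).im := by
    rw [neg_div, one_div, neg_im, inv_im, neg_div, neg_neg]
    exact div_pos hτ (normSq_pos.2 hτ0)
  have hquot : 1 / 2 * τ / τ = 1 / 2 := mul_div_cancel_right₀ _ hτ0
  rw [θ₂_eq_thetaChar, thetaChar_eq_exp_mul_jacobiTheta₂, jacobiTheta₂_functional_equation, hquot]
  have hroot : (-I * τ) ^ (1 / 2 : ℂ) ≠ 0 := by
    simp [cpow_eq_zero_iff, hτ0]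
  exact mul_ne_zero (exp_ne_zero _)
    (mul_ne_zero (mul_ne_zero (one_div_ne_zero hroot) (exp_ne_zero _)) (θ₄_ne_zero hinv))

lemma xfun_mul_θ₂ (n : ℕ) (hτ : 0 < τ.im) :
    xfun n τ * θ₂ (2 ^ (n - 1) * τ) = 2 * θ₃ (2 ^ (n - 1) * τ) :=
  div_mul_cancel₀ _ (θ₂_ne_zero (two_pow_mul_im_pos _ hτ))

lemma yfun_mul_θ₂ (n : ℕ) (hτ : 0 < τ.im) : yfun n τ * θ₂ (2 ^ (n - 1) * τ) = θ₂ (8 * τ) :=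
  div_mul_cancel₀ _ (θ₂_ne_zero (two_pow_mul_im_pos _ hτ))

lemma mul_θ₂_pow_eight_of_mul_θ₂_eq {x : ℂ} (hτ : 0 < τ.im)
    (hx : x * θ₂ (8 * τ) = 2 * θ₃ (8 * τ)) :
    x * (x + 2) ^ 4 * (x ^ 2 + 4) * θ₂ (8 * τ) ^ 8 = θ₂ τ ^ 8 := by
  calc x * (x + 2) ^ 4 * (x ^ 2 + 4) * θ₂ (8 * τ) ^ 8
      = x * θ₂ (8 * τ) * θ₂ (8 * τ) * (x * θ₂ (8 * τ) + 2 * θ₂ (8 * τ)) ^ 4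
        * ((x * θ₂ (8 * τ)) ^ 2 + 4 * θ₂ (8 * τ) ^ 2) := by ring
    _ = θ₂ τ ^ 8 := by rw [hx, θ₂_pow_eight hτ]; ring

end UpperHalfPlane

section ModularEquation

variable {R : Type*} [CommRing R]

/-- The polynomial of degree 8, homogeneous in `(w, u, v)`, whose vanishing at `w = y ^ 8` is the
defining equation of `X₀(1024)`. -/
def modularPoly (w u v : R) : R :=
  w ^ 8 - 4096 * v * w ^ 7 - 61696 * u * v * w ^ 6
    - 512 * u * v * (253 * u + 30464 * v) * w ^ 5
    - 16 * u * v * (4619 * u ^ 2 - 525568 * u * v + 33488896 * v ^ 2) * w ^ 4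
    - 512 * u * v * (31 * u ^ 3 + 35712 * u ^ 2 * v + 196608 * u * v ^ 2
        + 8388608 * v ^ 3) * w ^ 3
    - 32 * u ^ 3 * v * (47 * u ^ 2 - 320000 * u * v + 17268736 * v ^ 2) * w ^ 2
    - 64 * u ^ 3 * v * (u ^ 3 + 5248 * u ^ 2 * v + 1310720 * u * v ^ 2
        + 67108864 * v ^ 3) * w
    - u ^ 7 * v

/-- The product of `w - f(P, iᵏQ)` over `k = 0, 1, 2, 3`, where
`f(P, Q) = 128PQ(P² + Q²)(P + Q)⁴`, written in terms of `p = P⁴` and `q = Q⁴`. -/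
def quarticNorm (w p q : R) : R :=
  w ^ 4 - 2 ^ 12 * (p * q) * w ^ 3 - 15 * 2 ^ 16 * (p * q) * (p - q) ^ 2 * w ^ 2
    - 2 ^ 25 * (p * q) * (p - q) ^ 2 * (p ^ 2 + 6 * (p * q) + q ^ 2) * w
    - 2 ^ 28 * (p * q) * (p - q) ^ 6

lemma quarticNorm_eq_zero (P Q : R) :
    quarticNorm (128 * P * Q * (P ^ 2 + Q ^ 2) * (P + Q) ^ 4) (P ^ 4) (Q ^ 4) = 0 := by
  unfold quarticNorm
  ring

lemma modularPoly_eq_quarticNorm_mul_quarticNorm (w p q : R) :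
    modularPoly w (256 * (q * (q - p))) (p ^ 2) = quarticNorm w p q * quarticNorm w p (p - q) := by
  unfold modularPoly quarticNorm
  ring

lemma modularPoly_mul_right (w u v c : R) :
    modularPoly (w * c) (u * c) (v * c) = modularPoly w u v * c ^ 8 := by
  unfold modularPoly
  ring

end ModularEquation

lemma modularPoly_θ₂_eq_zero {τ : ℂ} (hτ : 0 < τ.im) :
    modularPoly (θ₂ τ ^ 8) (256 * (θ₃ (64 * τ) - θ₂ (64 * τ)) ^ 8) (θ₂ (8 * τ) ^ 8) = 0 := by
  have h8τ : 0 < (8 * τ).im := by simpa using hτ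
  have hu := θ₃_sub_θ₂_pow_eight h8τ
  rw [show 8 * (8 * τ) = 64 * τ by ring] at hu
  rw [hu, show θ₂ (8 * τ) ^ 8 = (θ₂ (8 * τ) ^ 4) ^ 2 by ring,
    modularPoly_eq_quarticNorm_mul_quarticNorm, θ₂_pow_eight hτ, quarticNorm_eq_zero, zero_mul]

theorem X0_1024_equation (τ : ℂ) (hτ : 0 < τ.im)
    (x y u v : ℂ) (hx : x = xfun 10 τ) (hy : y = yfun 10 τ)
    (hu : u = (x - 2) ^ 8) (hv : v = x * (x + 2) ^ 4 * (x ^ 2 + 4)) :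
    y ^ 64 - 4096 * v * y ^ 56 - 61696 * u * v * y ^ 48
      - 512 * u * v * (253 * u + 30464 * v) * y ^ 40
      - 16 * u * v * (4619 * u ^ 2 - 525568 * u * v + 33488896 * v ^ 2) * y ^ 32
      - 512 * u * v * (31 * u ^ 3 + 35712 * u ^ 2 * v + 196608 * u * v ^ 2
          + 8388608 * v ^ 3) * y ^ 24
      - 32 * u ^ 3 * v * (47 * u ^ 2 - 320000 * u * v + 17268736 * v ^ 2) * y ^ 16
      - 64 * u ^ 3 * v * (u ^ 3 + 5248 * u ^ 2 * v + 1310720 * u * v ^ 2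
          + 67108864 * v ^ 3) * y ^ 8
      - u ^ 7 * v = 0 := by
  have h8τ : 0 < (8 * τ).im := by simpa using hτ
  have h64τ : 0 < (64 * τ).im := by simpa using hτ
  have hθ : θ₂ (512 * τ) ≠ 0 := θ₂_ne_zero (by simpa using hτ)
  have h512 : (2 ^ (10 - 1) * τ : ℂ) = 512 * τ := by norm_num
  have hxθ : x * θ₂ (512 * τ) = 2 * θ₃ (512 * τ) := by rw [hx, ← h512, xfun_mul_θ₂ 10 hτ]
  have hyθ : y ^ 8 * θ₂ (512 * τ) ^ 8 = θ₂ (8 * τ) ^ 8 := by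
    rw [hy, ← mul_pow, ← h512, yfun_mul_θ₂ 10 hτ]
  have huθ : u * θ₂ (512 * τ) ^ 8 = 256 * (θ₃ (512 * τ) - θ₂ (512 * τ)) ^ 8 := by
    rw [hu, ← mul_pow, sub_mul, hxθ]
    ring
  have hvθ : v * θ₂ (512 * τ) ^ 8 = θ₂ (64 * τ) ^ 8 := by
    have h := mul_θ₂_pow_eight_of_mul_θ₂_eq (x := x) h64τ
    rw [show 8 * (64 * τ) = 512 * τ by ring] at h
    rw [hv, h hxθ]
  have hrel := modularPoly_θ₂_eq_zero h8τ
  rw [show 64 * (8 * τ) = 512 * τ by ring, show 8 * (8 * τ) = 64 * τ by ring,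
    ← hyθ, ← huθ, ← hvθ, modularPoly_mul_right] at hrel
  have hpoly : modularPoly (y ^ 8) u v = 0 :=
    (mul_eq_zero_iff_right (pow_ne_zero 8 (pow_ne_zero 8 hθ))).1 hrel
  rw [← hpoly, modularPoly]
  ring
end

section
/- For every even integer n ≥ 6, the function y_n is a modular function on Γ₀(2ⁿ): for every matrix (a b; c d) in SL₂(ℤ) with 2ⁿ ∣ c and every τ in the complex upper half-plane ℍ, y_n((aτ+b)/(cτ+d)) = y_n(τ). -/
open Complex Filter Topology

/-!
Write a point `(a σ + 8 b) / (C σ + d)` as `a / C - 1 / (C (C σ + d))`, with `C` even. Splitting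
the series of `θ₂` there into residue classes modulo `2C` and applying the functional equation of
the two-variable theta function to each class gives `g(a, C) (4 i C / (C σ + d))^{-1/2} θ₂(σ)`,
where `g(a, C)` is a quadratic Gauss sum. Since `g(a, 4C) = 2 g(a, C)`, this automorphy factor does
not change when `C` is multiplied by `4` with `C σ + d` fixed. For `n = 2j + 4` the numerator
`θ₂(8τ)` and the denominator `θ₂(8 · 4^j τ)` of `y_n` transform with moduli `C` that differ by the
factor `4^j` and with the same `C σ + d = c τ + d`, so their automorphy factors cancel.
-/

section IntegerSums

variable {M : Type*}

lemma sum_range_two_mul_eq_even_add_odd [AddCommMonoid M] (f : ℕ → M) (N : ℕ) :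
    ∑ i ∈ Finset.range (2 * N), f i =
      ∑ i ∈ Finset.range N, f (2 * i) + ∑ i ∈ Finset.range N, f (2 * i + 1) := by
  induction N with
  | zero => simp
  | succ N ih =>
    rw [show 2 * (N + 1) = 2 * N + 1 + 1 by ring]
    simp only [Finset.sum_range_succ, ih]
    abel

lemma tsum_int_eq_sum_range_tsum [AddCommGroup M] [UniformSpace M] [IsUniformAddGroup M]
    [CompleteSpace M] [T0Space M] (N : ℕ) [NeZero N] {f : ℤ → M} (hf : Summable f) :
    ∑' n, f n = ∑ s ∈ Finset.range N, ∑' k : ℤ, f (s + N * k) := by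
  let e : Fin N × ℤ ≃ ℤ := (Equiv.prodComm _ _).trans (Int.divModEquiv N).symm
  have he (s : Fin N) (k : ℤ) : e (s, k) = s + N * k := by
    simp only [e, Equiv.trans_apply, Equiv.prodComm_apply, Prod.swap_prod_mk,
      Int.divModEquiv_symm_apply]
    ring
  calc ∑' n, f n = ∑' p, (f ∘ e) p := (e.tsum_eq f).symm
    _ = ∑ s : Fin N, ∑' k, (f ∘ e) (s, k) := by
      rw [(e.summable_iff.mpr hf).tsum_prod, tsum_fintype]
    _ = ∑ s ∈ Finset.range N, ∑' k : ℤ, f (s + N * k) := by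
      simp only [Function.comp_apply, he, Finset.sum_range]

end IntegerSums

lemma ofReal_mul_cpow {r : ℝ} (hr : 0 < r) (x s : ℂ) :
    ((r : ℂ) * x) ^ s = (r : ℂ) ^ s * x ^ s := by
  have hr' : (r : ℂ) ≠ 0 := ofReal_ne_zero.mpr hr.ne'
  rcases eq_or_ne x 0 with rfl | hx
  · rcases eq_or_ne s 0 with rfl | hs <;> simp [*]
  · rw [cpow_def_of_ne_zero (mul_ne_zero hr' hx), cpow_def_of_ne_zero hr', cpow_def_of_ne_zero hx,
      log_ofReal_mul hr hx, ofReal_log hr.le, add_mul, Complex.exp_add]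

lemma four_mul_cpow_half (x : ℂ) : (4 * x) ^ (1 / 2 : ℂ) = 2 * x ^ (1 / 2 : ℂ) := by
  have hsqrt : (4 : ℂ) ^ (1 / 2 : ℂ) = 2 := by
    rw [show (4 : ℂ) = 2 ^ 2 by norm_num, one_div]
    exact pow_cpow_ofNat_inv (by simp [Real.pi_pos]) (by simpa using by positivity)
  have hmul := ofReal_mul_cpow four_pos x (1 / 2)
  rwa [ofReal_ofNat, hsqrt] at hmul

lemma im_natCast_mul_add_intCast_pos {C : ℕ} [NeZero C] (d : ℤ) {τ : ℂ} (hτ : 0 < τ.im) :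
    0 < (C * τ + d).im := by
  have hC : (0 : ℝ) < C := Nat.cast_pos.mpr (NeZero.pos C)
  simpa using mul_pos hC hτ

lemma exists_moebius_eq {a b c d : ℤ} (hdet : a * d - b * c = 1) (z : UpperHalfPlane) :
    ∃ τ : ℂ, 0 < τ.im ∧ (a * τ + b) / (c * τ + d) = z := by
  let γ : Matrix.SpecialLinearGroup (Fin 2) ℤ :=
    ⟨!![a, b; c, d], by rw [Matrix.det_fin_two_of, hdet]⟩
  refine ⟨(γ⁻¹ • z : UpperHalfPlane), (γ⁻¹ • z).im_pos, ?_⟩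
  have hγ := UpperHalfPlane.coe_specialLinearGroup_apply γ (γ⁻¹ • z)
  rw [smul_inv_smul] at hγ
  simpa [γ] using hγ.symm

/-- The quadratic phase `e^{πi a m² / (4C)}` by which the term of index `m` of the series
`θ₂ τ = ∑_{m odd} e^{πi τ m² / 4}` is multiplied when `τ` is translated by `a / C`. -/
noncomputable def quadPhase (a : ℤ) (C : ℕ) (m : ℤ) : ℂ :=
  Complex.exp (Real.pi * I * a * (m : ℂ) ^ 2 / (4 * C))

/-- The quadratic Gauss sum of `quadPhase a C` over the residue classes modulo `4C` that are
congruent to `r` modulo `2`. For `r = 0` it is the classical `∑_{s mod 2C} e^{πi a s² / C}`. -/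
noncomputable def quadGaussSum (a : ℤ) (C : ℕ) (r : ℤ) : ℂ :=
  ∑ s ∈ Finset.range (2 * C), quadPhase a C (2 * s + r)

section GaussSum

variable (a : ℤ) (C : ℕ) [NeZero C]

lemma quadPhase_periodic : Function.Periodic (quadPhase a C) (4 * C) := by
  intro m
  refine Complex.exp_eq_exp_iff_exists_int.mpr ⟨a * (m + 2 * C), ?_⟩
  have hC : (C : ℂ) ≠ 0 := NeZero.ne _
  push_cast
  field_simp
  ring

variable {a C} in
lemma quadPhase_add_two_mul_of_odd {m : ℤ} (h : Odd (a * (m + C))) :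
    quadPhase a C (m + 2 * C) = -quadPhase a C m := by
  obtain ⟨k, hk⟩ := h
  have hk' : (a : ℂ) * (m + C) = 2 * k + 1 := by exact_mod_cast hk
  have hC : (C : ℂ) ≠ 0 := NeZero.ne _
  have hexp : Real.pi * I * a * ((m + 2 * C : ℤ) : ℂ) ^ 2 / (4 * C) =
      Real.pi * I * a * (m : ℂ) ^ 2 / (4 * C) + k * (2 * Real.pi * I) + Real.pi * I := by
    push_cast
    field_simp
    linear_combination 4 * C * hk'
  rw [quadPhase, quadPhase, hexp, exp_add_pi_mul_I, Complex.exp_add,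
    exp_int_mul_two_pi_mul_I, mul_one]

lemma quadGaussSum_periodic : Function.Periodic (quadGaussSum a C) 2 := by
  intro r
  have hwrap : quadPhase a C (2 * (2 * C : ℕ) + r) = quadPhase a C (2 * (0 : ℕ) + r) := by
    rw [← quadPhase_periodic a C (2 * (0 : ℕ) + r)]
    congr 1
    push_cast
    ring
  have hshift := Finset.sum_range_succ' (fun s : ℕ ↦ quadPhase a C (2 * s + r)) (2 * C)
  rw [Finset.sum_range_succ, hwrap] at hshift
  rw [quadGaussSum, quadGaussSum, add_right_cancel hshift]
  refine Finset.sum_congr rfl fun s _ ↦ congrArg _ ?_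
  push_cast
  ring

variable {r : ℤ}

lemma quadGaussSum_of_even (hr : Even r) : quadGaussSum a C r = quadGaussSum a C 0 := by
  obtain ⟨k, rfl⟩ := hr.two_dvd
  simpa [mul_comm] using (quadGaussSum_periodic a C).int_mul_eq k

variable {a C}

lemma quadGaussSum_of_odd (ha : Odd a) (hC : Even C) (hr : Odd r) : quadGaussSum a C r = 0 := by
  rw [quadGaussSum, two_mul, Finset.sum_range_add, ← Finset.sum_add_distrib]
  refine Finset.sum_eq_zero fun s _ ↦ ?_
  have hodd : Odd (a * (2 * s + r + C)) :=
    ha.mul (((even_two_mul _).add_odd hr).add_even (by exact_mod_cast hC))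
  rw [add_eq_zero_iff_eq_neg', ← quadPhase_add_two_mul_of_odd hodd]
  congr 1
  push_cast
  ring

variable (a C) in
lemma sum_range_four_mul_quadPhase (r : ℤ) :
    ∑ s ∈ Finset.range (4 * C), quadPhase a C (2 * s + r) = 2 * quadGaussSum a C r := by
  have hwrap (s : ℕ) : quadPhase a C (2 * (2 * C + s : ℕ) + r) = quadPhase a C (2 * s + r) := by
    rw [← quadPhase_periodic a C (2 * s + r)]
    congr 1
    push_cast
    ring
  rw [show 4 * C = 2 * C + 2 * C by ring, Finset.sum_range_add]
  simp only [hwrap, quadGaussSum, two_mul (∑ _ ∈ _, _)]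

lemma quadGaussSum_four_mul (ha : Odd a) (hC : Even C) :
    quadGaussSum a (4 * C) 0 = 2 * quadGaussSum a C 0 := by
  have hphase (s : ℕ) : quadPhase a (4 * C) (2 * s + 0) = quadPhase a C s := by
    rw [quadPhase, quadPhase]
    congr 1
    push_cast
    field_simp
    ring
  calc quadGaussSum a (4 * C) 0
      = ∑ s ∈ Finset.range (2 * (4 * C)), quadPhase a C s :=
        Finset.sum_congr rfl fun s _ ↦ hphase s
    _ = 2 * quadGaussSum a C 0 + 2 * quadGaussSum a C 1 := by
        simp only [sum_range_two_mul_eq_even_add_odd, ← sum_range_four_mul_quadPhase,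
          Nat.cast_add, Nat.cast_mul, Nat.cast_ofNat, Nat.cast_one, add_zero]
    _ = 2 * quadGaussSum a C 0 := by
        rw [quadGaussSum_of_odd ha hC odd_one, mul_zero, add_zero]

end GaussSum

section ThetaSeries

lemma summable_theta₂ {τ : ℂ} (hτ : 0 < τ.im) :
    Summable fun n : ℤ ↦ Complex.exp (Real.pi * I * τ * ((n : ℂ) + 1 / 2) ^ 2) := by
  refine (((summable_jacobiTheta₂_term_iff (τ / 2) τ).mpr hτ).mul_left
    (Complex.exp (Real.pi * I * τ / 4))).congr fun n ↦ ?_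
  rw [jacobiTheta₂_term, ← Complex.exp_add]
  congr 1
  ring

lemma theta₂_I_ne_zero : θ₂ I ≠ 0 := by
  have hreal (n : ℤ) : Complex.exp (Real.pi * I * I * ((n : ℂ) + 1 / 2) ^ 2) =
      (Real.exp (-Real.pi * ((n : ℝ) + 1 / 2) ^ 2) : ℝ) := by
    rw [mul_assoc (Real.pi : ℂ), I_mul_I]
    push_cast
    ring_nf
  have hsum := summable_theta₂ (τ := I) (by simp)
  simp only [hreal] at hsum
  rw [θ₂, tsum_congr hreal, ← ofReal_tsum, ofReal_ne_zero]
  exact ((summable_ofReal.mp hsum).tsum_pos (fun n ↦ (Real.exp_pos _).le) 0 (Real.exp_pos _)).ne'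

lemma theta₂_add_eight_mul_intCast (τ : ℂ) (k : ℤ) : θ₂ (τ + 8 * k) = θ₂ τ := by
  refine tsum_congr fun n ↦ Complex.exp_eq_exp_iff_exists_int.mpr
    ⟨k * (4 * n ^ 2 + 4 * n + 1), ?_⟩
  push_cast
  ring

lemma tsum_exp_sq_add_mul {w N : ℂ} (hw : w ≠ 0) (hN : N ≠ 0) (x : ℂ) :
    ∑' k : ℤ, Complex.exp (Real.pi * I * w * (x + N * k) ^ 2) =
      1 / (-I * (N ^ 2 * w)) ^ (1 / 2 : ℂ) * jacobiTheta₂ (x / N) (-1 / (N ^ 2 * w)) := by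
  have hexpand : ∑' k : ℤ, Complex.exp (Real.pi * I * w * (x + N * k) ^ 2) =
      Complex.exp (Real.pi * I * w * x ^ 2) * jacobiTheta₂ (N * w * x) (N ^ 2 * w) := by
    rw [jacobiTheta₂, ← tsum_mul_left]
    refine tsum_congr fun k ↦ ?_
    rw [jacobiTheta₂_term, ← Complex.exp_add]
    congr 1
    ring
  have hcancel : Complex.exp (Real.pi * I * w * x ^ 2) *
      Complex.exp (-Real.pi * I * (N * w * x) ^ 2 / (N ^ 2 * w)) = 1 := by
    rw [← Complex.exp_add, ← Complex.exp_zero]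
    congr 1
    field_simp
    ring
  have harg : N * w * x / (N ^ 2 * w) = x / N := by field_simp
  rw [hexpand, jacobiTheta₂_functional_equation, harg]
  linear_combination (1 / (-I * (N ^ 2 * w)) ^ (1 / 2 : ℂ) *
    jacobiTheta₂ (x / N) (-1 / (N ^ 2 * w))) * hcancel

variable {a : ℤ} {C : ℕ} [NeZero C]

lemma theta₂_div_add (a : ℤ) {w : ℂ} (hw : 0 < w.im) :
    θ₂ (a / C + w) = ∑ s ∈ Finset.range (2 * C), quadPhase a C (2 * s + 1) *
      ∑' k : ℤ, Complex.exp (Real.pi * I * w * (s + 1 / 2 + 2 * C * k) ^ 2) := by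
  have hC : (C : ℂ) ≠ 0 := NeZero.ne _
  have him : 0 < ((a : ℂ) / C + w).im := by
    have : ((a : ℂ) / C).im = 0 := by exact_mod_cast ofReal_im (a / C)
    rwa [add_im, this, zero_add]
  rw [θ₂, tsum_int_eq_sum_range_tsum (2 * C) (summable_theta₂ him)]
  refine Finset.sum_congr rfl fun s _ ↦ ?_
  rw [← tsum_mul_left]
  refine tsum_congr fun k ↦ ?_
  rw [quadPhase, ← Complex.exp_add]
  refine Complex.exp_eq_exp_iff_exists_int.mpr ⟨a * ((2 * s + 1) * k + 2 * C * k ^ 2), ?_⟩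
  push_cast
  field_simp
  ring

-- Completing the square: since `a d ≡ 1` modulo `8C`,
-- `a (2s + 1)² + 2 (2s + 1) m + d m² ≡ a (2s + 1 + d m)²` modulo `8C`.
lemma quadPhase_mul_jacobiTheta₂_term {b d : ℤ} (hdet : a * d - 8 * b * C = 1) (σ : ℂ)
    (s m : ℤ) :
    quadPhase a C (2 * s + 1) *
        jacobiTheta₂_term m ((s + 1 / 2) / (2 * C)) ((C * σ + d) / (4 * C)) =
      Complex.exp (Real.pi * I * σ * (m / 2) ^ 2) * quadPhase a C (2 * s + (1 + d * m)) := by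
  have hC : (C : ℂ) ≠ 0 := NeZero.ne _
  have hdet' : (a : ℂ) * d - 8 * b * C = 1 := by exact_mod_cast hdet
  rw [quadPhase, quadPhase, jacobiTheta₂_term, ← Complex.exp_add, ← Complex.exp_add]
  refine Complex.exp_eq_exp_iff_exists_int.mpr
    ⟨-(b * (d * m ^ 2 + 2 * (2 * s + 1) * m)), ?_⟩
  push_cast
  field_simp
  linear_combination (-4 * (d * m ^ 2 + 2 * (2 * s + 1) * m) : ℂ) * hdet'

lemma tsum_exp_mul_quadGaussSum {d : ℤ} (ha : Odd a) (hd : Odd d) (hC : Even C) (σ : ℂ) :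
    ∑' m : ℤ, Complex.exp (Real.pi * I * σ * (m / 2) ^ 2) * quadGaussSum a C (1 + d * m) =
      quadGaussSum a C 0 * θ₂ σ := by
  have hinj : Function.Injective fun j : ℤ ↦ 2 * j + 1 := fun x y h ↦ by simpa using h
  rw [← hinj.tsum_eq, θ₂, ← tsum_mul_left]
  · refine tsum_congr fun j ↦ ?_
    rw [quadGaussSum_of_even a C (odd_one.add_odd (hd.mul (odd_two_mul_add_one j))), mul_comm]
    push_cast
    ring_nf
  · intro m hm
    rw [range_two_mul_add_one, Set.mem_ofPred_eq, ← Int.not_even_iff_odd]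
    intro heven
    have hzero := quadGaussSum_of_odd ha hC (odd_one.add_even (heven.mul_left d))
    exact right_ne_zero_of_mul hm hzero

lemma sum_quadPhase_mul_jacobiTheta₂ {b d : ℤ} (hC : Even C) (hdet : a * d - 8 * b * C = 1)
    {σ : ℂ} (hσ : 0 < σ.im) :
    ∑ s ∈ Finset.range (2 * C), quadPhase a C (2 * s + 1) *
        jacobiTheta₂ ((s + 1 / 2) / (2 * C)) ((C * σ + d) / (4 * C)) =
      quadGaussSum a C 0 * θ₂ σ := by
  have hodd : Odd (a * d) := ⟨4 * b * C, by linarith⟩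
  have him : 0 < ((C * σ + d) / (4 * C)).im := by
    have hCσ : 0 < (C * σ + d).im := im_natCast_mul_add_intCast_pos d hσ
    have hpos : (0 : ℝ) < (4 * C : ℕ) := Nat.cast_pos.mpr (NeZero.pos _)
    have hdiv := div_pos hCσ hpos
    rw [← div_natCast_im] at hdiv
    exact_mod_cast hdiv
  have hsum (s : ℕ) : Summable fun m ↦ quadPhase a C (2 * s + 1) *
      jacobiTheta₂_term m ((s + 1 / 2) / (2 * C)) ((C * σ + d) / (4 * C)) :=
    ((summable_jacobiTheta₂_term_iff _ _).mpr him).mul_left _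
  simp only [jacobiTheta₂, ← tsum_mul_left]
  rw [← Summable.tsum_finsetSum fun s _ ↦ hsum s,
    ← tsum_exp_mul_quadGaussSum (Int.odd_mul.mp hodd).1 (Int.odd_mul.mp hodd).2 hC]
  refine tsum_congr fun m ↦ ?_
  rw [quadGaussSum, Finset.mul_sum]
  exact Finset.sum_congr rfl fun s _ ↦ by
    exact_mod_cast quadPhase_mul_jacobiTheta₂_term hdet σ s m

end ThetaSeries

section Transformation

/-- The automorphy factor of `θ₂` under `σ ↦ (a σ + 8 b) / (C σ + d)` for even `C > 0`, as a
function of the value `J = C σ + d` of the denominator. -/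
noncomputable def thetaMultiplier (a : ℤ) (C : ℕ) (J : ℂ) : ℂ :=
  quadGaussSum a C 0 / (4 * I * C / J) ^ (1 / 2 : ℂ)

variable {a b d : ℤ} {C : ℕ} [NeZero C]

lemma thetaMultiplier_four_mul (ha : Odd a) (hC : Even C) (J : ℂ) :
    thetaMultiplier a (4 * C) J = thetaMultiplier a C J := by
  have hbase : 4 * I * (4 * C : ℕ) / J = 4 * (4 * I * C / J) := by
    push_cast
    ring
  rw [thetaMultiplier, thetaMultiplier, hbase, four_mul_cpow_half, quadGaussSum_four_mul ha hC,
    mul_div_mul_left _ _ two_ne_zero]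

lemma thetaMultiplier_four_pow_mul (ha : Odd a) (hC : Even C) (J : ℂ) (j : ℕ) :
    thetaMultiplier a (4 ^ j * C) J = thetaMultiplier a C J := by
  induction j with
  | zero => rw [pow_zero, one_mul]
  | succ j ih =>
    rw [pow_succ', mul_assoc, thetaMultiplier_four_mul ha (hC.mul_left _), ih]

theorem theta₂_moebius (hC : Even C) (hdet : a * d - 8 * b * C = 1) {σ : ℂ} (hσ : 0 < σ.im) :
    θ₂ ((a * σ + 8 * b) / (C * σ + d)) = thetaMultiplier a C (C * σ + d) * θ₂ σ := by
  have hC0 : (C : ℂ) ≠ 0 := NeZero.ne _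
  have hdet' : (a : ℂ) * d - 8 * b * C = 1 := by exact_mod_cast hdet
  set J : ℂ := C * σ + d with hJ
  have hJim : 0 < J.im := im_natCast_mul_add_intCast_pos d hσ
  have hJ0 : J ≠ 0 := fun h ↦ by simp [h] at hJim
  set w : ℂ := -1 / (C * J) with hw
  have hsplit : (a * σ + 8 * b) / J = a / C + w := by
    rw [hw]
    field_simp
    linear_combination (-1 : ℂ) * hdet'
  have hwim : 0 < w.im := by
    have hCJ : 0 < (C * J).im := by simpa using im_natCast_mul_add_intCast_pos (C := C) 0 hJim
    simpa [hw, neg_div, inv_neg] using UpperHalfPlane.im_inv_neg_coe_pos ⟨C * J, hCJ⟩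
  have hw0 : w ≠ 0 := fun h ↦ by simp [h] at hwim
  have hroot : -I * ((2 * C) ^ 2 * w) = 4 * I * C / J := by rw [hw]; field_simp; ring
  have hdual : -1 / ((2 * C) ^ 2 * w) = J / (4 * C) := by rw [hw]; field_simp; ring
  rw [hsplit, theta₂_div_add a hwim]
  simp only [tsum_exp_sq_add_mul hw0 (mul_ne_zero two_ne_zero hC0), hroot, hdual,
    mul_left_comm (quadPhase _ _ _)]
  rw [← Finset.mul_sum, hJ, sum_quadPhase_mul_jacobiTheta₂ hC hdet hσ, thetaMultiplier]
  ring

-- If the sum vanished, so would `θ₂` at every point of the form `(a σ + 8 b) / (C σ + d)`, and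
-- `I` is such a point.
lemma quadGaussSum_ne_zero (hC : Even C) (hcop : IsCoprime a C) : quadGaussSum a C 0 ≠ 0 := by
  have hcop8 : IsCoprime a (8 * C) := by
    have h2 : IsCoprime a 2 := hcop.of_isCoprime_of_dvd_right (by exact_mod_cast hC.two_dvd)
    exact IsCoprime.mul_right (by simpa using h2.pow_right (n := 3)) hcop
  obtain ⟨d, b, hbez⟩ := hcop8
  have hdet : a * d - 8 * -b * C = 1 := by linear_combination hbez
  obtain ⟨σ, hσ, hσI⟩ := exists_moebius_eq hdet UpperHalfPlane.I
  intro hzero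
  have htrans := theta₂_moebius hC hdet hσ
  push_cast at hσI htrans
  rw [hσI, thetaMultiplier, hzero, zero_div, zero_mul] at htrans
  exact theta₂_I_ne_zero htrans

lemma thetaMultiplier_ne_zero (hC : Even C) (hcop : IsCoprime a C) {J : ℂ} (hJ : J ≠ 0) :
    thetaMultiplier a C J ≠ 0 := by
  have hbase : 4 * I * C / J ≠ 0 := by simp [hJ, NeZero.ne C]
  exact div_ne_zero (quadGaussSum_ne_zero hC hcop) (by simp [cpow_eq_zero_iff, hbase])

end Transformation

section ModularFunction

lemma yfun_two_mul_add_four (j : ℕ) (τ : ℂ) :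
    yfun (2 * j + 4) τ = θ₂ (8 * τ) / θ₂ (8 * (4 ^ j * τ)) := by
  have hpow : (2 : ℂ) ^ (2 * j + 4 - 1) = 8 * 4 ^ j := by
    rw [show 2 * j + 4 - 1 = 2 * j + 3 by omega, pow_add, pow_mul]
    norm_num
    ring
  rw [yfun, hpow, mul_assoc]

lemma yfun_add_intCast (j : ℕ) (τ : ℂ) (k : ℤ) :
    yfun (2 * j + 4) (τ + k) = yfun (2 * j + 4) τ := by
  have hscale : 8 * (4 ^ j * (τ + k)) = 8 * (4 ^ j * τ) + 8 * (4 ^ j * k : ℤ) := by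
    push_cast
    ring
  rw [yfun_two_mul_add_four, yfun_two_mul_add_four, hscale, mul_add,
    theta₂_add_eight_mul_intCast, theta₂_add_eight_mul_intCast]

variable {a b d : ℤ} {c : ℕ} {τ : ℂ}

lemma theta₂_eight_mul_moebius [NeZero c] (hdet : a * d - b * (16 * c) = 1) (hτ : 0 < τ.im) :
    θ₂ (8 * ((a * τ + b) / (16 * c * τ + d))) =
      thetaMultiplier a (2 * c) (16 * c * τ + d) * θ₂ (8 * τ) := by
  have hdet8 : a * d - 8 * b * (2 * c : ℕ) = 1 := by
    push_cast
    linear_combination hdet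
  have htrans := theta₂_moebius (even_two_mul c) hdet8 (σ := 8 * τ) (by simpa using hτ)
  rw [show ((2 * c : ℕ) : ℂ) * (8 * τ) + d = 16 * c * τ + d by push_cast; ring] at htrans
  rw [← htrans]
  congr 1
  ring

lemma yfun_moebius_of_neZero [NeZero c] (j : ℕ) (hdet : a * d - b * (16 * 4 ^ j * c) = 1)
    (hτ : 0 < τ.im) :
    yfun (2 * j + 4) ((a * τ + b) / (16 * 4 ^ j * c * τ + d)) = yfun (2 * j + 4) τ := by
  have hscaled : 0 < (4 ^ j * τ).im := by
    simpa using im_natCast_mul_add_intCast_pos (C := 4 ^ j) 0 hτ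
  set J : ℂ := 16 * 4 ^ j * c * τ + d with hJ
  have hJim : 0 < J.im := by
    simpa [hJ] using im_natCast_mul_add_intCast_pos (C := 16 * 4 ^ j * c) d hτ
  have hodd : Odd (a * d) := ⟨b * (8 * 4 ^ j * c), by linarith⟩
  have hcop : IsCoprime a (2 * c : ℕ) :=
    ⟨d, -b * (8 * 4 ^ j), by push_cast; linear_combination hdet⟩
  have hmult : thetaMultiplier a (2 * c) J ≠ 0 :=
    thetaMultiplier_ne_zero (even_two_mul c) hcop fun h ↦ by simp [h] at hJim
  have hnum : θ₂ (8 * ((a * τ + b) / J)) = thetaMultiplier a (2 * c) J * θ₂ (8 * τ) := by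
    have hdet' : a * d - b * (16 * (4 ^ j * c : ℕ)) = 1 := by
      push_cast
      linear_combination hdet
    have hJ' : 16 * ((4 ^ j * c : ℕ) : ℂ) * τ + d = J := by
      rw [hJ]
      push_cast
      ring
    rw [← thetaMultiplier_four_pow_mul (Int.odd_mul.mp hodd).1 (even_two_mul c) J j,
      mul_left_comm, ← hJ', theta₂_eight_mul_moebius hdet' hτ]
  have hden : θ₂ (8 * (4 ^ j * ((a * τ + b) / J))) =
      thetaMultiplier a (2 * c) J * θ₂ (8 * (4 ^ j * τ)) := by
    have hdet' : a * d - 4 ^ j * b * (16 * c) = 1 := by linear_combination hdet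
    have hJ' : 16 * c * (4 ^ j * τ) + d = J := by rw [hJ]; ring
    have hscale : 4 ^ j * ((a * τ + b) / J) = (a * (4 ^ j * τ) + (4 ^ j * b : ℤ)) / J := by
      push_cast
      ring
    rw [hscale, ← hJ', theta₂_eight_mul_moebius hdet' hscaled]
  rw [yfun_two_mul_add_four, yfun_two_mul_add_four, hnum, hden, mul_div_mul_left _ _ hmult]

lemma yfun_moebius_of_natCast (j : ℕ) (hdet : a * d - b * (16 * 4 ^ j * c) = 1) (hτ : 0 < τ.im) :
    yfun (2 * j + 4) ((a * τ + b) / (16 * 4 ^ j * c * τ + d)) = yfun (2 * j + 4) τ := by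
  rcases eq_or_ne c 0 with rfl | hc
  · have had : a * d = 1 := by simpa using hdet
    have htranslate : (a * τ + b) / (16 * 4 ^ j * (0 : ℕ) * τ + d) = τ + (a * b : ℤ) := by
      rcases Int.mul_eq_one_iff_eq_one_or_neg_one.mp had with ⟨rfl, rfl⟩ | ⟨rfl, rfl⟩ <;>
        simp [div_neg, add_comm]
    rw [htranslate, yfun_add_intCast]
  · have : NeZero c := ⟨hc⟩
    exact yfun_moebius_of_neZero j hdet hτ

end ModularFunction

theorem y_modular (n : ℕ) (hn : 6 ≤ n) (hn2 : Even n)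
    (a b c d : ℤ) (hdet : a * d - b * c = 1) (hc : (2 ^ n : ℤ) ∣ c)
    (τ : ℂ) (hτ : 0 < τ.im) :
    yfun n (((a : ℂ) * τ + b) / ((c : ℂ) * τ + d)) = yfun n τ := by
  obtain ⟨j, rfl⟩ : ∃ j, n = 2 * j + 4 := by
    obtain ⟨p, rfl⟩ := hn2
    exact ⟨p - 2, by omega⟩
  obtain ⟨k, rfl⟩ : (16 * 4 ^ j : ℤ) ∣ c := by
    rwa [show (16 * 4 ^ j : ℤ) = 2 ^ (2 * j + 4) by rw [pow_add, pow_mul]; ring]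
  obtain ⟨m, rfl | rfl⟩ := k.eq_nat_or_neg
  · exact_mod_cast yfun_moebius_of_natCast j hdet hτ
  · have hneg : -a * -d - -b * (16 * 4 ^ j * m) = 1 := by linear_combination hdet
    rw [← yfun_moebius_of_natCast j hneg hτ, ← neg_div_neg_eq]
    push_cast
    ring_nf
end

section
/- For every τ in the complex upper half-plane ℍ, the three eta products x(τ) = η(4τ)²η(8τ)², y(τ) = 2η(8τ)²η(16τ)², z(τ) = η(8τ)⁸/(η(4τ)²η(16τ)²) satisfy the Fermat quartic relation x(τ)⁴ + y(τ)⁴ = z(τ)⁴ (a defining equation of X₀(64)). -/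
open Complex

/-- Dedekind eta function η(τ) = exp(πiτ/12)·∏_{n≥1}(1 − exp(2πinτ)). -/
noncomputable def η (τ : ℂ) : ℂ :=
  Complex.exp (Real.pi * Complex.I * τ / 12) *
    ∏' n : ℕ, (1 - Complex.exp (2 * Real.pi * Complex.I * ((n : ℂ) + 1) * τ))

/-!
Put `θ(q, z) = ∑ₘ zᵐ q^(m²)`. Multiplying two theta series and splitting `ℤ²` by the parity of the
sum of the coordinates expresses `θ(q, 1)²`, `θ(q, -1)²` and `θ(q, q)²` through `θ(q², 1)` and
`θ(q², q²)`; squaring once more gives Jacobi's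
`θ(q, 1)⁴ = θ(q, -1)⁴ + q θ(q, q)⁴`. The Jacobi triple product, obtained as the limit of its finite
form, writes the three theta values as quotients of Euler products `(qʳ; qʳ)_∞` with `r = 1, 2, 4`,
and in terms of `η` the quartic identity becomes
`η(τ)¹⁶ η(4τ)⁸ + 16 η(τ)⁸ η(4τ)¹⁶ = η(2τ)²⁴`. The Fermat relation is this identity at `4τ`.
-/

open Filter Topology

section FiniteProducts

variable {R : Type*} [CommRing R] {K : Type*} [Field K]

/-- The finite `q`-Pochhammer symbol `(a; q)_n`. -/
def qPochhammer (a q : R) (n : ℕ) : R := ∏ k ∈ Finset.range n, (1 - a * q ^ k)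

/-- The reciprocal `1 / (q; q)_k`, extended by zero to negative `k`; with this convention
`invQFactorial_sub_one` holds for every integer index. -/
def invQFactorial (q : K) (k : ℤ) : K := if k < 0 then 0 else (qPochhammer q q k.toNat)⁻¹

/-- The Gaussian binomial coefficient `[2n choose n + m]_q`, which vanishes unless `|m| ≤ n`. -/
def centralQBinom (q : K) (n : ℕ) (m : ℤ) : K :=
  qPochhammer q q (2 * n) * invQFactorial q (n - m) * invQFactorial q (n + m)

/-- The term `zᵐ q^(m²)` of the theta series. -/
def qThetaTerm (q z : K) (m : ℤ) : K := z ^ m * q ^ (m ^ 2)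

lemma qPochhammer_succ (a q : R) (n : ℕ) :
    qPochhammer a q (n + 1) = qPochhammer a q n * (1 - a * q ^ n) :=
  Finset.prod_range_succ _ _

lemma invQFactorial_natCast (q : K) (n : ℕ) :
    invQFactorial q n = (qPochhammer q q n)⁻¹ := by
  simp [invQFactorial]

lemma invQFactorial_of_neg (q : K) {k : ℤ} (hk : k < 0) : invQFactorial q k = 0 :=
  if_pos hk

lemma one_sub_self_mul_pow_ne_zero {q : R} (hq : ¬IsOfFinOrder q) (k : ℕ) :
    1 - q * q ^ k ≠ 0 := by
  rw [← pow_succ']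
  exact fun h ↦ hq (isOfFinOrder_iff_pow_eq_one.mpr ⟨k + 1, k.succ_pos, (sub_eq_zero.mp h).symm⟩)

lemma invQFactorial_sub_one {q : K} (hq : ¬IsOfFinOrder q) (k : ℤ) :
    invQFactorial q (k - 1) = (1 - q ^ k) * invQFactorial q k := by
  rcases lt_trichotomy k 0 with hk | rfl | hk
  · rw [invQFactorial_of_neg q hk, invQFactorial_of_neg q (by lia), mul_zero]
  · rw [invQFactorial_of_neg q (by lia), zpow_zero, sub_self, zero_mul]
  · obtain ⟨n, rfl⟩ := Int.eq_succ_of_zero_lt hk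
    rw [add_sub_cancel_right, ← Nat.cast_succ, invQFactorial_natCast, invQFactorial_natCast,
      zpow_natCast, pow_succ', qPochhammer_succ, mul_inv_rev,
      mul_inv_cancel_left₀ (one_sub_self_mul_pow_ne_zero hq n)]

lemma centralQBinom_zero (q : K) (m : ℤ) : centralQBinom q 0 m = if m = 0 then 1 else 0 := by
  rcases lt_trichotomy m 0 with hm | rfl | hm
  · simp [centralQBinom, invQFactorial_of_neg q hm, hm.ne]
  · simp [centralQBinom, invQFactorial, qPochhammer]
  · simp [centralQBinom, invQFactorial_of_neg q (neg_lt_zero.mpr hm), hm.ne']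

lemma centralQBinom_succ {q : K} (hq₀ : q ≠ 0) (hq : ¬IsOfFinOrder q) (n : ℕ) (m : ℤ) :
    centralQBinom q (n + 1) m =
      (1 + q ^ (2 * n + 1)) * centralQBinom q n m +
        q ^ ((n : ℤ) + 1 - m) * centralQBinom q n (m - 1) +
        q ^ ((n : ℤ) + 1 + m) * centralQBinom q n (m + 1) := by
  have hneg : invQFactorial q (n - m) =
      (1 - q ^ ((n : ℤ) + 1 - m)) * invQFactorial q (n + 1 - m) := by
    rw [← invQFactorial_sub_one hq]; ring_nf
  have hpos : invQFactorial q (n + m) =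
      (1 - q ^ ((n : ℤ) + 1 + m)) * invQFactorial q (n + 1 + m) := by
    rw [← invQFactorial_sub_one hq]; ring_nf
  have hneg' : invQFactorial q (n - (m + 1)) =
      (1 - q ^ ((n : ℤ) + 1 - m) * q⁻¹) * invQFactorial q (n - m) := by
    rw [← zpow_sub_one₀ hq₀, show (n : ℤ) + 1 - m - 1 = n - m by ring,
      ← invQFactorial_sub_one hq, sub_sub]
  have hpos' : invQFactorial q (n + (m - 1)) =
      (1 - q ^ ((n : ℤ) + 1 + m) * q⁻¹) * invQFactorial q (n + m) := by
    rw [← zpow_sub_one₀ hq₀, show (n : ℤ) + 1 + m - 1 = n + m by ring,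
      ← invQFactorial_sub_one hq, add_sub_assoc]
  have hmul : q ^ (2 * n + 1) = q ^ ((n : ℤ) + 1 - m) * q ^ ((n : ℤ) + 1 + m) * q⁻¹ := by
    rw [← zpow_add₀ hq₀, ← zpow_sub_one₀ hq₀, ← zpow_natCast]
    congr 1; push_cast; ring
  simp only [centralQBinom, Nat.cast_succ, mul_add_one, qPochhammer_succ,
    show n - (m - 1) = (n : ℤ) + 1 - m by ring, show n + (m + 1) = (n : ℤ) + 1 + m by ring]
  rw [hneg', hpos', hneg, hpos, ← pow_succ', ← pow_succ', pow_succ q (2 * n + 1), hmul]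
  field_simp
  ring

lemma qThetaTerm_add_one {q z : K} (hq : q ≠ 0) (hz : z ≠ 0) (m : ℤ) :
    qThetaTerm q z (m + 1) = z * q * (q ^ 2) ^ m * qThetaTerm q z m := by
  have hexp : (m + 1) ^ 2 = 1 + 2 * m + m ^ 2 := by ring
  rw [qThetaTerm, qThetaTerm, hexp, zpow_add₀ hq, zpow_add₀ hq, zpow_add_one₀ hz, zpow_one,
    zpow_mul, zpow_ofNat]
  ring

lemma qThetaTerm_sub_one {q z : K} (hq : q ≠ 0) (hz : z ≠ 0) (m : ℤ) :
    qThetaTerm q z (m - 1) = z⁻¹ * q * (q ^ 2) ^ (-m) * qThetaTerm q z m := by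
  have hexp : (m - 1) ^ 2 = 1 + 2 * -m + m ^ 2 := by ring
  rw [qThetaTerm, qThetaTerm, hexp, zpow_add₀ hq, zpow_add₀ hq, zpow_sub_one₀ hz, zpow_one,
    zpow_mul, zpow_ofNat]
  ring

lemma qThetaTerm_sq_mul {q z : K} (hq : q ≠ 0) (hz : z ≠ 0) (m : ℤ) :
    q * z * qThetaTerm q (q ^ 2 * z) m = qThetaTerm q z (m + 1) := by
  rw [qThetaTerm_add_one hq hz, qThetaTerm, qThetaTerm, mul_zpow]
  ring

lemma qThetaTerm_add_mul_qThetaTerm_sub {q z w : K} (hq₀ : q ≠ 0) (hz : z ≠ 0) (hw : w ≠ 0)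
    (a b : ℤ) :
    qThetaTerm q z (a + b) * qThetaTerm q w (a - b) =
      qThetaTerm (q ^ 2) (z * w) a * qThetaTerm (q ^ 2) (z / w) b := by
  have hsq : q ^ ((a + b) ^ 2) * q ^ ((a - b) ^ 2) = (q ^ 2) ^ (a ^ 2) * (q ^ 2) ^ (b ^ 2) := by
    rw [← zpow_ofNat q 2, ← zpow_mul, ← zpow_mul, ← zpow_add₀ hq₀, ← zpow_add₀ hq₀]
    ring_nf
  simp only [qThetaTerm, mul_zpow, div_zpow, zpow_add₀ hz, zpow_sub₀ hw]
  linear_combination z ^ a * z ^ b * (w ^ a / w ^ b) * hsq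

lemma qThetaTerm_add_add_one_mul_qThetaTerm_sub {q z w : K} (hq₀ : q ≠ 0) (hz : z ≠ 0)
    (hw : w ≠ 0) (a b : ℤ) :
    qThetaTerm q z (a + b + 1) * qThetaTerm q w (a - b) =
      z * q * (qThetaTerm (q ^ 2) (q ^ 2 * (z * w)) a *
        qThetaTerm (q ^ 2) (q ^ 2 * (z / w)) b) := by
  have hshift : (q ^ 2) ^ (a + b) = (q ^ 2) ^ a * (q ^ 2) ^ b := zpow_add₀ (pow_ne_zero 2 hq₀) a b
  have hsplit := qThetaTerm_add_mul_qThetaTerm_sub hq₀ hz hw a b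
  rw [qThetaTerm_add_one hq₀ hz, hshift]
  simp only [qThetaTerm, mul_zpow (q ^ 2)] at hsplit ⊢
  linear_combination z * q * (q ^ 2) ^ a * (q ^ 2) ^ b * hsplit

lemma centralQBinom_succ_mul_qThetaTerm {q z : K} (hq₀ : q ≠ 0) (hz : z ≠ 0)
    (hq : ¬IsOfFinOrder (q ^ 2)) (n : ℕ) (m : ℤ) :
    centralQBinom (q ^ 2) (n + 1) m * qThetaTerm q z m =
      centralQBinom (q ^ 2) n m * qThetaTerm q z m * (1 + (q * (q ^ 2) ^ n) ^ 2) +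
        (centralQBinom (q ^ 2) n (m - 1) * qThetaTerm q z (m - 1) * (z * (q * (q ^ 2) ^ n)) +
          centralQBinom (q ^ 2) n (m + 1) * qThetaTerm q z (m + 1) *
            (z⁻¹ * (q * (q ^ 2) ^ n))) := by
  have hQ₀ : q ^ 2 ≠ 0 := pow_ne_zero 2 hq₀
  rw [centralQBinom_succ hQ₀ hq, qThetaTerm_sub_one hq₀ hz, qThetaTerm_add_one hq₀ hz,
    sub_eq_add_neg (_ + 1), zpow_add₀ hQ₀, zpow_add₀ hQ₀ _ m, zpow_add_one₀ hQ₀, zpow_natCast]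
  field_simp
  ring

variable [TopologicalSpace K] [IsTopologicalRing K]

theorem hasSum_finite_jacobi_triple_product {q z : K} (hq₀ : q ≠ 0) (hz : z ≠ 0)
    (hq : ¬IsOfFinOrder (q ^ 2)) (n : ℕ) :
    HasSum (fun m : ℤ ↦ centralQBinom (q ^ 2) n m * qThetaTerm q z m)
      (qPochhammer (-(z * q)) (q ^ 2) n * qPochhammer (-(z⁻¹ * q)) (q ^ 2) n) := by
  induction n with
  | zero =>
    have hzero := hasSum_ite_eq (0 : ℤ) (1 : K)
    convert! hzero using 1
    · funext m
      rcases eq_or_ne m 0 with rfl | hm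
      · simp [centralQBinom_zero, qThetaTerm]
      · simp [centralQBinom_zero, hm]
    · simp [qPochhammer]
  | succ n ih =>
    have hright := (Equiv.subRight (1 : ℤ)).hasSum_iff.mpr ih
    have hleft := (Equiv.addRight (1 : ℤ)).hasSum_iff.mpr ih
    convert! (ih.mul_right (1 + (q * (q ^ 2) ^ n) ^ 2)).add
      ((hright.mul_right (z * (q * (q ^ 2) ^ n))).add
        (hleft.mul_right (z⁻¹ * (q * (q ^ 2) ^ n)))) using 1
    · exact funext (centralQBinom_succ_mul_qThetaTerm hq₀ hz hq n)
    · rw [qPochhammer_succ, qPochhammer_succ]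
      field_simp
      ring

end FiniteProducts

section InfiniteProducts

variable {𝕜 : Type*} [NormedField 𝕜]

/-- The infinite `q`-Pochhammer symbol `(a; q)_∞`, meaningful for `‖q‖ < 1`. -/
noncomputable def qPochhammerInf (a q : 𝕜) : 𝕜 := ∏' k : ℕ, (1 - a * q ^ k)

/-- Euler's function `(q; q)_∞ = ∏_{n ≥ 1} (1 - qⁿ)`. -/
noncomputable abbrev eulerFunction (q : 𝕜) : 𝕜 := qPochhammerInf q q

lemma norm_sq_lt_one {q : 𝕜} (hq : ‖q‖ < 1) : ‖q ^ 2‖ < 1 := by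
  rw [norm_pow]
  exact pow_lt_one₀ (norm_nonneg q) hq two_ne_zero

lemma not_isOfFinOrder_of_norm_lt_one {q : 𝕜} (hq : ‖q‖ < 1) : ¬IsOfFinOrder q :=
  fun h ↦ hq.ne h.norm_eq_one

lemma summable_norm_neg_mul_pow (a : 𝕜) {q : 𝕜} (hq : ‖q‖ < 1) :
    Summable fun k : ℕ ↦ ‖-(a * q ^ k)‖ := by
  simpa only [norm_neg, norm_mul, norm_pow] using
    (summable_geometric_of_lt_one (norm_nonneg q) hq).mul_left ‖a‖

variable [CompleteSpace 𝕜]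

lemma multipliable_one_sub_mul_pow (a : 𝕜) {q : 𝕜} (hq : ‖q‖ < 1) :
    Multipliable fun k : ℕ ↦ 1 - a * q ^ k := by
  simpa only [sub_eq_add_neg] using
    multipliable_one_add_of_summable (summable_norm_neg_mul_pow a hq)

lemma tendsto_qPochhammer (a : 𝕜) {q : 𝕜} (hq : ‖q‖ < 1) :
    Tendsto (qPochhammer a q) atTop (𝓝 (qPochhammerInf a q)) :=
  (multipliable_one_sub_mul_pow a hq).hasProd.tendsto_prod_nat

lemma eulerFunction_ne_zero {q : 𝕜} (hq : ‖q‖ < 1) : eulerFunction q ≠ 0 := by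
  have hfactor (k : ℕ) : 1 + -(q * q ^ k) ≠ 0 := by
    simpa only [sub_eq_add_neg] using
      one_sub_self_mul_pow_ne_zero (not_isOfFinOrder_of_norm_lt_one hq) k
  simpa only [qPochhammerInf, sub_eq_add_neg] using
    tprod_one_add_ne_zero_of_summable hfactor (summable_norm_neg_mul_pow q hq)

lemma qPochhammerInf_eq_one_sub_mul (a : 𝕜) {q : 𝕜} (hq : ‖q‖ < 1) :
    qPochhammerInf a q = (1 - a) * qPochhammerInf (a * q) q := by
  have hshift (k : ℕ) : 1 - a * q * q ^ k = 1 - a * q ^ (k + 1) := by ring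
  have hmult := (multipliable_one_sub_mul_pow (a * q) hq).congr hshift
  have hsplit := tprod_eq_zero_mul' (f := fun k ↦ 1 - a * q ^ k) hmult
  rwa [pow_zero, mul_one, ← tprod_congr hshift] at hsplit

lemma qPochhammerInf_sq_mul (a : 𝕜) {q : 𝕜} (hq : ‖q‖ < 1) :
    qPochhammerInf a (q ^ 2) * qPochhammerInf (a * q) (q ^ 2) = qPochhammerInf a q := by
  have heven (k : ℕ) : 1 - a * (q ^ 2) ^ k = 1 - a * q ^ (2 * k) := by ring
  have hodd (k : ℕ) : 1 - a * q * (q ^ 2) ^ k = 1 - a * q ^ (2 * k + 1) := by ring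
  have hQ := norm_sq_lt_one hq
  rw [qPochhammerInf, qPochhammerInf, tprod_congr heven, tprod_congr hodd]
  exact tprod_even_mul_odd (f := fun k ↦ 1 - a * q ^ k)
    ((multipliable_one_sub_mul_pow a hQ).congr heven)
    ((multipliable_one_sub_mul_pow (a * q) hQ).congr hodd)

lemma qPochhammerInf_mul_neg (a : 𝕜) {q : 𝕜} (hq : ‖q‖ < 1) :
    qPochhammerInf a q * qPochhammerInf (-a) q = qPochhammerInf (a ^ 2) (q ^ 2) := by
  rw [qPochhammerInf, qPochhammerInf, ← (multipliable_one_sub_mul_pow a hq).tprod_mul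
    (multipliable_one_sub_mul_pow (-a) hq)]
  exact tprod_congr fun k ↦ by ring

lemma qPochhammerInf_sq_mul_eulerFunction {q : 𝕜} (hq : ‖q‖ < 1) :
    qPochhammerInf q (q ^ 2) * eulerFunction (q ^ 2) = eulerFunction q := by
  rw [eulerFunction, eulerFunction, ← qPochhammerInf_sq_mul q hq, ← sq]

lemma tendsto_invQFactorial {q : 𝕜} (hq : ‖q‖ < 1) :
    Tendsto (invQFactorial q) atTop (𝓝 (eulerFunction q)⁻¹) := by
  have htoNat : Tendsto Int.toNat atTop atTop :=
    tendsto_atTop.mpr fun b ↦ (eventually_ge_atTop (b : ℤ)).mono fun k hk ↦ by lia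
  refine (((tendsto_qPochhammer q hq).comp htoNat).inv₀ (eulerFunction_ne_zero hq)).congr' ?_
  filter_upwards [eventually_ge_atTop 0] with k hk
  exact (if_neg hk.not_gt).symm

lemma exists_norm_qPochhammer_le (a : 𝕜) {q : 𝕜} (hq : ‖q‖ < 1) :
    ∃ C : ℝ, ∀ n, ‖qPochhammer a q n‖ ≤ C := by
  obtain ⟨C, hC⟩ := (tendsto_qPochhammer a hq).norm.bddAbove_range
  exact ⟨C, fun n ↦ hC ⟨n, rfl⟩⟩

lemma exists_norm_invQFactorial_le {q : 𝕜} (hq : ‖q‖ < 1) :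
    ∃ C : ℝ, ∀ k, ‖invQFactorial q k‖ ≤ C := by
  obtain ⟨C, hC⟩ :=
    ((tendsto_qPochhammer q hq).inv₀ (eulerFunction_ne_zero hq)).norm.bddAbove_range
  have hCn (n : ℕ) : ‖(qPochhammer q q n)⁻¹‖ ≤ C := hC ⟨n, rfl⟩
  refine ⟨C, fun k ↦ ?_⟩
  rcases lt_or_ge k 0 with hk | hk
  · simpa only [invQFactorial_of_neg q hk, norm_zero] using (norm_nonneg _).trans (hCn 0)
  · lift k to ℕ using hk
    simpa only [invQFactorial_natCast] using hCn k

lemma tendsto_centralQBinom {q : 𝕜} (hq : ‖q‖ < 1) (m : ℤ) :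
    Tendsto (fun n ↦ centralQBinom q n m) atTop (𝓝 (eulerFunction q)⁻¹) := by
  have hcast : Tendsto (fun n : ℕ ↦ (n : ℤ)) atTop atTop := tendsto_natCast_atTop_atTop
  have hneg := (tendsto_invQFactorial hq).comp (tendsto_atTop_add_const_right _ (-m) hcast)
  have hpos := (tendsto_invQFactorial hq).comp (tendsto_atTop_add_const_right _ m hcast)
  have hfact := (tendsto_qPochhammer q hq).comp (tendsto_id.const_mul_atTop' two_pos)
  have hlim := (hfact.mul hneg).mul hpos
  rwa [mul_inv_cancel₀ (eulerFunction_ne_zero hq), one_mul] at hlim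

lemma exists_norm_centralQBinom_le {q : 𝕜} (hq : ‖q‖ < 1) :
    ∃ C : ℝ, ∀ n m, ‖centralQBinom q n m‖ ≤ C := by
  obtain ⟨C, hC⟩ := exists_norm_qPochhammer_le q hq
  obtain ⟨D, hD⟩ := exists_norm_invQFactorial_le hq
  have hC₀ : 0 ≤ C := (norm_nonneg _).trans (hC 0)
  have hD₀ : 0 ≤ D := (norm_nonneg _).trans (hD 0)
  refine ⟨C * D * D, fun n m ↦ ?_⟩
  rw [centralQBinom, norm_mul, norm_mul]
  gcongr
  exacts [hC _, hD _, hD _]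

end InfiniteProducts

section Theta

variable {𝕜 : Type*} [NormedField 𝕜]

/-- The theta series `θ(q, z) = ∑_{m ∈ ℤ} zᵐ q^(m²)`, meaningful for `‖q‖ < 1` and `z ≠ 0`. -/
noncomputable def qTheta (q z : 𝕜) : 𝕜 := ∑' m : ℤ, qThetaTerm q z m

lemma tsum_int_prod_eq_tsum_add_tsum {E : Type*} [NormedAddCommGroup E] [CompleteSpace E]
    {G : ℤ × ℤ → E} (hG : Summable G) :
    ∑' p, G p = ∑' p : ℤ × ℤ, G (p.1 + p.2, p.1 - p.2) +
      ∑' p : ℤ × ℤ, G (p.1 + p.2 + 1, p.1 - p.2) := by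
  let F : (ℤ × ℤ) ⊕ (ℤ × ℤ) → ℤ × ℤ :=
    Sum.elim (fun p ↦ (p.1 + p.2, p.1 - p.2)) (fun p ↦ (p.1 + p.2 + 1, p.1 - p.2))
  have hinj : Function.Injective F := by
    rintro (⟨a, b⟩ | ⟨a, b⟩) (⟨c, d⟩ | ⟨c, d⟩) h <;>
      simp only [F, Sum.elim_inl, Sum.elim_inr, Prod.mk.injEq, Sum.inl.injEq, Sum.inr.injEq,
        reduceCtorEq] at h ⊢ <;>
      lia
  have hsurj : Function.Surjective F := by
    rintro ⟨m, n⟩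
    rcases Int.even_or_odd' (m - n) with ⟨b, hb | hb⟩
    · exact ⟨.inl (n + b, b), by simp only [F, Sum.elim_inl, Prod.mk.injEq]; lia⟩
    · exact ⟨.inr (n + b, b), by simp only [F, Sum.elim_inr, Prod.mk.injEq]; lia⟩
  let e := Equiv.ofBijective F ⟨hinj, hsurj⟩
  have hGF : Summable (G ∘ F) := e.summable_iff.mpr hG
  rw [← e.tsum_eq G]
  exact (hGF.comp_injective Sum.inl_injective).tsum_sum (hGF.comp_injective Sum.inr_injective)

lemma mul_qTheta_sq_mul {q z : 𝕜} (hq₀ : q ≠ 0) (hz : z ≠ 0) :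
    q * z * qTheta q (q ^ 2 * z) = qTheta q z := by
  rw [qTheta, qTheta, ← tsum_mul_left, ← (Equiv.addRight (1 : ℤ)).tsum_eq (qThetaTerm q z)]
  exact tsum_congr fun m ↦ qThetaTerm_sq_mul hq₀ hz m

lemma summable_norm_pow_mul_pow_sq {q : 𝕜} (hq : ‖q‖ < 1) (z : 𝕜) :
    Summable fun n : ℕ ↦ ‖z ^ n * q ^ n ^ 2‖ := by
  have hratio : Tendsto (fun n : ℕ ↦ ‖z * q ^ (2 * n + 1)‖) atTop (𝓝 0) := by
    have hexp : Tendsto (fun n : ℕ ↦ 2 * n + 1) atTop atTop :=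
      tendsto_atTop_mono (fun n ↦ by simp only [id_eq]; lia) tendsto_id
    simpa using (((tendsto_pow_atTop_nhds_zero_of_norm_lt_one hq).comp hexp).const_mul z).norm
  refine summable_of_ratio_norm_eventually_le one_half_lt_one ?_
  filter_upwards [hratio.eventually_le_const one_half_pos] with n hn
  calc ‖‖z ^ (n + 1) * q ^ (n + 1) ^ 2‖‖ = ‖z * q ^ (2 * n + 1)‖ * ‖‖z ^ n * q ^ n ^ 2‖‖ := by
        rw [norm_norm, norm_norm, ← norm_mul]; ring_nf
    _ ≤ 1 / 2 * ‖‖z ^ n * q ^ n ^ 2‖‖ := by gcongr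

lemma summable_norm_qThetaTerm {q : 𝕜} (hq : ‖q‖ < 1) (z : 𝕜) :
    Summable fun m ↦ ‖qThetaTerm q z m‖ := by
  refine .of_nat_of_neg ?_ ?_
  · refine (summable_norm_pow_mul_pow_sq hq z).congr fun n ↦ ?_
    rw [qThetaTerm, zpow_natCast, ← Nat.cast_pow, zpow_natCast]
  · refine (summable_norm_pow_mul_pow_sq hq z⁻¹).congr fun n ↦ ?_
    rw [qThetaTerm, zpow_neg, zpow_natCast, neg_sq, ← Nat.cast_pow, zpow_natCast, inv_pow]

variable [CompleteSpace 𝕜]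

theorem jacobi_triple_product {q z : 𝕜} (hq₀ : q ≠ 0) (hq : ‖q‖ < 1) (hz : z ≠ 0) :
    qTheta q z = eulerFunction (q ^ 2) *
      (qPochhammerInf (-(z * q)) (q ^ 2) * qPochhammerInf (-(z⁻¹ * q)) (q ^ 2)) := by
  have hQ := norm_sq_lt_one hq
  obtain ⟨C, hC⟩ := exists_norm_centralQBinom_le hQ
  have hsum : Tendsto (fun n ↦ ∑' m, centralQBinom (q ^ 2) n m * qThetaTerm q z m) atTop
      (𝓝 (∑' m, (eulerFunction (q ^ 2))⁻¹ * qThetaTerm q z m)) := by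
    refine tendsto_tsum_of_dominated_convergence ((summable_norm_qThetaTerm hq z).mul_left C)
      (fun m ↦ (tendsto_centralQBinom hQ m).mul_const _) (.of_forall fun n m ↦ ?_)
    rw [norm_mul]
    gcongr
    exact hC n m
  have hprod := (tendsto_qPochhammer (-(z * q)) hQ).mul (tendsto_qPochhammer (-(z⁻¹ * q)) hQ)
  have hfinite := hasSum_finite_jacobi_triple_product hq₀ hz (not_isOfFinOrder_of_norm_lt_one hQ)
  rw [tendsto_nhds_unique hprod (hsum.congr fun n ↦ (hfinite n).tsum_eq), tsum_mul_left, qTheta,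
    mul_inv_cancel_left₀ (eulerFunction_ne_zero hQ)]

lemma qTheta_mul_qTheta_eq_tsum {q : 𝕜} (hq : ‖q‖ < 1) (z w : 𝕜) :
    qTheta q z * qTheta q w = ∑' p : ℤ × ℤ, qThetaTerm q z p.1 * qThetaTerm q w p.2 :=
  tsum_mul_tsum_of_summable_norm (summable_norm_qThetaTerm hq z) (summable_norm_qThetaTerm hq w)

theorem qTheta_mul_qTheta {q z w : 𝕜} (hq₀ : q ≠ 0) (hq : ‖q‖ < 1) (hz : z ≠ 0) (hw : w ≠ 0) :
    qTheta q z * qTheta q w = qTheta (q ^ 2) (z * w) * qTheta (q ^ 2) (z / w) +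
      z * q * (qTheta (q ^ 2) (q ^ 2 * (z * w)) * qTheta (q ^ 2) (q ^ 2 * (z / w))) := by
  have hQ := norm_sq_lt_one hq
  have hsummable := summable_mul_of_summable_norm (summable_norm_qThetaTerm hq z)
    (summable_norm_qThetaTerm hq w)
  rw [qTheta_mul_qTheta_eq_tsum hq, qTheta_mul_qTheta_eq_tsum hQ, qTheta_mul_qTheta_eq_tsum hQ,
    tsum_int_prod_eq_tsum_add_tsum hsummable, ← tsum_mul_left]
  simp only [qThetaTerm_add_mul_qThetaTerm_sub hq₀ hz hw,
    qThetaTerm_add_add_one_mul_qThetaTerm_sub hq₀ hz hw]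

lemma qTheta_one_sq {q : 𝕜} (hq₀ : q ≠ 0) (hq : ‖q‖ < 1) :
    qTheta q 1 ^ 2 = qTheta (q ^ 2) 1 ^ 2 + q * qTheta (q ^ 2) (q ^ 2) ^ 2 := by
  simpa [← sq] using qTheta_mul_qTheta hq₀ hq one_ne_zero one_ne_zero

lemma qTheta_neg_one_sq {q : 𝕜} (hq₀ : q ≠ 0) (hq : ‖q‖ < 1) :
    qTheta q (-1) ^ 2 = qTheta (q ^ 2) 1 ^ 2 - q * qTheta (q ^ 2) (q ^ 2) ^ 2 := by
  have hne : (-1 : 𝕜) ≠ 0 := neg_ne_zero.mpr one_ne_zero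
  simpa [← sq, sub_eq_add_neg] using qTheta_mul_qTheta hq₀ hq hne hne

lemma qTheta_self_sq {q : 𝕜} (hq₀ : q ≠ 0) (hq : ‖q‖ < 1) :
    qTheta q q ^ 2 = 2 * qTheta (q ^ 2) 1 * qTheta (q ^ 2) (q ^ 2) := by
  have hmul := qTheta_mul_qTheta hq₀ hq hq₀ hq₀
  have hperiod := mul_qTheta_sq_mul (pow_ne_zero 2 hq₀) (one_ne_zero (α := 𝕜))
  rw [div_self hq₀, mul_one, ← sq q, ← sq (q ^ 2)] at hmul
  rw [mul_one, mul_one] at hperiod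
  linear_combination hmul + qTheta (q ^ 2) (q ^ 2) * hperiod

theorem jacobi_quartic_identity {q : 𝕜} (hq₀ : q ≠ 0) (hq : ‖q‖ < 1) :
    qTheta q 1 ^ 4 = qTheta q (-1) ^ 4 + q * qTheta q q ^ 4 := by
  have hpow (x : 𝕜) : x ^ 4 = (x ^ 2) ^ 2 := pow_mul x 2 2
  rw [hpow, hpow, hpow, qTheta_one_sq hq₀ hq, qTheta_neg_one_sq hq₀ hq, qTheta_self_sq hq₀ hq]
  ring

lemma qTheta_neg_one_mul_eulerFunction {q : 𝕜} (hq₀ : q ≠ 0) (hq : ‖q‖ < 1) :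
    qTheta q (-1) * eulerFunction (q ^ 2) = eulerFunction q ^ 2 := by
  rw [jacobi_triple_product hq₀ hq (neg_ne_zero.mpr one_ne_zero), inv_neg_one, neg_one_mul, neg_neg,
    ← qPochhammerInf_sq_mul_eulerFunction hq]
  ring

lemma qTheta_one_mul_eulerFunction {q : 𝕜} (hq₀ : q ≠ 0) (hq : ‖q‖ < 1) :
    qTheta q 1 * (eulerFunction q ^ 2 * eulerFunction (q ^ 4) ^ 2) = eulerFunction (q ^ 2) ^ 5 := by
  have hQ := norm_sq_lt_one hq
  have hodd := qPochhammerInf_sq_mul_eulerFunction hq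
  have hoddQ := qPochhammerInf_sq_mul_eulerFunction hQ
  rw [← qPochhammerInf_mul_neg q hQ, ← pow_mul] at hoddQ
  rw [jacobi_triple_product hq₀ hq one_ne_zero, inv_one, one_mul, ← hodd]
  set P := qPochhammerInf q (q ^ 2)
  set N := qPochhammerInf (-q) (q ^ 2)
  set y := eulerFunction (q ^ 2)
  calc y * (N * N) * ((P * y) ^ 2 * eulerFunction (q ^ 4) ^ 2)
      = y ^ 3 * (P * N * eulerFunction (q ^ 4)) ^ 2 := by ring
    _ = y ^ 5 := by rw [hoddQ]; ring

lemma qTheta_self_mul_eulerFunction {q : 𝕜} (hq₀ : q ≠ 0) (hq : ‖q‖ < 1) :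
    qTheta q q * eulerFunction (q ^ 2) = 2 * eulerFunction (q ^ 4) ^ 2 := by
  have hQ := norm_sq_lt_one hq
  have hneg := qPochhammerInf_mul_neg (q ^ 2) hQ
  have hone := qPochhammerInf_eq_one_sub_mul (-1) hQ
  rw [← pow_mul] at hneg
  rw [neg_one_mul, sub_neg_eq_add, one_add_one_eq_two] at hone
  rw [jacobi_triple_product hq₀ hq hq₀, inv_mul_cancel₀ hq₀, ← sq q, hone, eulerFunction,
    eulerFunction, ← hneg]
  ring

theorem eulerFunction_quartic_identity {q : 𝕜} (hq₀ : q ≠ 0) (hq : ‖q‖ < 1) :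
    eulerFunction q ^ 16 * eulerFunction (q ^ 4) ^ 8 +
        16 * q * (eulerFunction q ^ 8 * eulerFunction (q ^ 4) ^ 16) =
      eulerFunction (q ^ 2) ^ 24 := by
  set x := eulerFunction q
  set y := eulerFunction (q ^ 2)
  set w := eulerFunction (q ^ 4)
  have hneg : (qTheta q (-1) * y) ^ 4 = (x ^ 2) ^ 4 :=
    congrArg (· ^ 4) (qTheta_neg_one_mul_eulerFunction hq₀ hq)
  have hself : (qTheta q q * y) ^ 4 = (2 * w ^ 2) ^ 4 :=
    congrArg (· ^ 4) (qTheta_self_mul_eulerFunction hq₀ hq)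
  calc x ^ 16 * w ^ 8 + 16 * q * (x ^ 8 * w ^ 16)
      = x ^ 8 * w ^ 8 * ((x ^ 2) ^ 4 + q * (2 * w ^ 2) ^ 4) := by ring
    _ = x ^ 8 * w ^ 8 * y ^ 4 * (qTheta q (-1) ^ 4 + q * qTheta q q ^ 4) := by
        rw [← hneg, ← hself]; ring
    _ = y ^ 4 * (qTheta q 1 * (x ^ 2 * w ^ 2)) ^ 4 := by
        rw [← jacobi_quartic_identity hq₀ hq]; ring
    _ = y ^ 24 := by rw [qTheta_one_mul_eulerFunction hq₀ hq]; ring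

end Theta

section DedekindEta

lemma norm_exp_two_pi_mul_I_mul_lt_one {τ : ℂ} (hτ : 0 < τ.im) :
    ‖exp (2 * Real.pi * I * τ)‖ < 1 :=
  UpperHalfPlane.norm_exp_two_pi_I_lt_one ⟨τ, hτ⟩

lemma η_natCast_mul (r : ℕ) (τ : ℂ) :
    η (r * τ) =
      exp (Real.pi * I * τ / 12) ^ r * eulerFunction (exp (2 * Real.pi * I * τ) ^ r) := by
  rw [η, eulerFunction, qPochhammerInf, ← exp_nat_mul]
  congr 1
  · ring_nf
  · refine tprod_congr fun n ↦ ?_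
    rw [← pow_succ', ← exp_nat_mul, ← exp_nat_mul]
    push_cast
    ring_nf

lemma η_ne_zero {τ : ℂ} (hτ : 0 < τ.im) : η τ ≠ 0 := by
  have hη := η_natCast_mul 1 τ
  rw [Nat.cast_one, one_mul, pow_one, pow_one] at hη
  rw [hη]
  exact mul_ne_zero (exp_ne_zero _) (eulerFunction_ne_zero (norm_exp_two_pi_mul_I_mul_lt_one hτ))

theorem η_quartic_identity {τ : ℂ} (hτ : 0 < τ.im) :
    η τ ^ 16 * η (4 * τ) ^ 8 + 16 * (η τ ^ 8 * η (4 * τ) ^ 16) = η (2 * τ) ^ 24 := by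
  have hη₁ := η_natCast_mul 1 τ
  have hη₂ := η_natCast_mul 2 τ
  have hη₄ := η_natCast_mul 4 τ
  have hq : exp (2 * Real.pi * I * τ) = exp (Real.pi * I * τ / 12) ^ 24 := by
    rw [← exp_nat_mul]
    push_cast
    ring_nf
  have heuler := eulerFunction_quartic_identity (exp_ne_zero _)
    (norm_exp_two_pi_mul_I_mul_lt_one hτ)
  simp only [Nat.cast_one, one_mul, pow_one, Nat.cast_ofNat] at hη₁ hη₂ hη₄
  rw [hη₁, hη₂, hη₄]
  set u := exp (Real.pi * I * τ / 12)
  set q := exp (2 * Real.pi * I * τ)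
  linear_combination u ^ 48 * heuler -
    16 * u ^ 48 * eulerFunction q ^ 8 * eulerFunction (q ^ 4) ^ 16 * hq

end DedekindEta

theorem X0_64_fermat (τ : ℂ) (hτ : 0 < τ.im) :
    (η (4 * τ) ^ 2 * η (8 * τ) ^ 2) ^ 4 + (2 * η (8 * τ) ^ 2 * η (16 * τ) ^ 2) ^ 4 =
      (η (8 * τ) ^ 8 / (η (4 * τ) ^ 2 * η (16 * τ) ^ 2)) ^ 4 := by
  have hη₄ : η (4 * τ) ≠ 0 := η_ne_zero (by simpa using hτ)
  have hη₁₆ : η (16 * τ) ≠ 0 := η_ne_zero (by simpa using hτ)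
  have hquartic := η_quartic_identity (τ := 4 * τ) (by simpa using hτ)
  rw [show 4 * (4 * τ) = 16 * τ by ring, show 2 * (4 * τ) = 8 * τ by ring] at hquartic
  rw [div_pow, eq_div_iff (by positivity)]
  linear_combination η (8 * τ) ^ 8 * hquartic
end
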